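/- Fix an integer k ≥ 416. Let G be a finite simple graph, L a 10-assignment for G, and α, β two L-colorings of G. Suppose G contains six distinct vertices a, b, c, d, e, f with ab, bc, cd, de, ef, ac, bd, ce edges of G, d_G(a) = d_G(f) = 5, and d_G(b) = d_G(c) = d_G(d) = d_G(e) = 6. Let S = {a, b, c, d, e, f}. If there exists a k-good recoloring sequence in G − S from the restriction of α to G − S to the restriction of β to G − S, then there exists a k-good recoloring sequence in G from α to β. -/

import Mathlib

def IsLColoring {V : Type} (G : SimpleGraph V) (L : V → Finset ℕ) (φ : V → ℕ) : Prop :=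
  (∀ v, φ v ∈ L v) ∧ ∀ ⦃u w : V⦄, G.Adj u w → φ u ≠ φ w

def recolorCount {V : Type} {m : ℕ} (φ : Fin (m + 1) → V → ℕ) (v : V) : ℕ :=
  (Finset.univ.filter fun i : Fin m => φ i.castSucc v ≠ φ i.succ v).card

def IsRecolSeq {V : Type} (G : SimpleGraph V) (L : V → Finset ℕ) {m : ℕ}
    (φ : Fin (m + 1) → V → ℕ) (α β : V → ℕ) : Prop :=
  φ 0 = α ∧ φ (Fin.last m) = β ∧ (∀ i, IsLColoring G L (φ i)) ∧
    ∀ i : Fin m, ∃! v : V, φ i.castSucc v ≠ φ i.succ v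

/-!
The recoloring of `G − S` is performed move by move. Before a move that gives an outside vertex the
color of a neighbor `v ∈ S`, the vertex `v` must dodge. Having 10 colors, it can avoid, besides the
colors around it, the next few colors that will appear on its neighbors outside `S`; if a neighbor
in `S` is ready to step aside, `v` can ignore the color of that neighbor and look one step further
ahead. As `v` has few neighbors outside `S`, each recolored at most `k` times, dodging alone costs
`a` and `c` a fraction of `k` moves, but may cost `f`, `e`, `d` and `b` slightly more than `k`. Each
of these four therefore makes a fixed number of its moves with help; the helpers can afford it since
`c`, which bears most of the help, has only two neighbors outside `S`. A final phase of boundedly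
many moves gives the vertices of `S` their target colors one after the other.
-/

section Moves

variable {V : Type} {G : SimpleGraph V} {L : V → Finset ℕ} {φ ψ χ : V → ℕ}

/-- A list of moves `(v, x)`, each recoloring the vertex `v` with a new color `x`, that leads from
the coloring `φ` to the coloring `ψ` through `L`-colorings only. Recording the moves instead of the
intermediate colorings makes concatenation and looking ahead easy. -/
inductive RecolorsBy [DecidableEq V] (G : SimpleGraph V) (L : V → Finset ℕ) :
    (V → ℕ) → List (V × ℕ) → (V → ℕ) → Prop
  | nil {φ : V → ℕ} (hφ : IsLColoring G L φ) : RecolorsBy G L φ [] φ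
  | cons {φ ψ : V → ℕ} {v : V} {x : ℕ} {M : List (V × ℕ)} (hφ : IsLColoring G L φ)
      (hx : x ≠ φ v) (hM : RecolorsBy G L (Function.update φ v x) M ψ) :
      RecolorsBy G L φ ((v, x) :: M) ψ

/-- The number of moves of the list `M` that recolor the vertex `v`. -/
def moveCount [DecidableEq V] (M : List (V × ℕ)) (v : V) : ℕ :=
  (M.map Prod.fst).count v

@[simp]
theorem moveCount_nil [DecidableEq V] : moveCount ([] : List (V × ℕ)) = 0 := by
  ext v
  simp [moveCount]

@[simp]
theorem moveCount_cons [DecidableEq V] (v : V) (x : ℕ) (M : List (V × ℕ)) :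
    moveCount ((v, x) :: M) = Pi.single v 1 + moveCount M := by
  ext u
  simp only [moveCount, List.map_cons, List.count_cons, beq_iff_eq, Pi.add_apply, Pi.single_apply,
    eq_comm (a := u), add_comm]

@[simp]
theorem moveCount_append [DecidableEq V] (M N : List (V × ℕ)) :
    moveCount (M ++ N) = moveCount M + moveCount N := by
  ext v
  simp [moveCount]

theorem moveCount_eq_zero [DecidableEq V] {M : List (V × ℕ)} {v : V} (h : ∀ m ∈ M, m.1 ≠ v) :
    moveCount M v = 0 := by
  simpa [moveCount, List.count_eq_zero] using fun x hx => h (v, x) hx rfl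

theorem moveCount_le_of_sublist [DecidableEq V] {M N : List (V × ℕ)} (h : M.Sublist N) (v : V) :
    moveCount M v ≤ moveCount N v :=
  (h.map Prod.fst).count_le v

theorem IsLColoring.update [DecidableEq V] (hφ : IsLColoring G L φ) {v : V} {x : ℕ} (hx : x ∈ L v)
    (hne : ∀ t, G.Adj v t → φ t ≠ x) : IsLColoring G L (Function.update φ v x) := by
  refine ⟨fun u => ?_, fun u w huw => ?_⟩
  · obtain rfl | hu := eq_or_ne u v
    · simpa using hx
    · simpa [hu] using hφ.1 u
  · obtain rfl | hu := eq_or_ne u v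
    · simpa [huw.ne'] using (hne w huw).symm
    · obtain rfl | hw := eq_or_ne w v
      · simpa [hu] using hne u huw.symm
      · simpa [hu, hw] using hφ.2 huw

namespace RecolorsBy

variable [DecidableEq V] {M N : List (V × ℕ)}

theorem isLColoring_left (h : RecolorsBy G L φ M ψ) : IsLColoring G L φ := by
  cases h <;> assumption

theorem isLColoring_right (h : RecolorsBy G L φ M ψ) : IsLColoring G L ψ := by
  induction h <;> assumption

theorem eq_of_nil (h : RecolorsBy G L φ [] ψ) : φ = ψ := by
  cases h
  rfl

theorem append (h : RecolorsBy G L φ M ψ) (h' : RecolorsBy G L ψ N χ) :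
    RecolorsBy G L φ (M ++ N) χ := by
  induction h with
  | nil _ => exact h'
  | cons hφ hx _ ih => exact cons hφ hx (ih h')

theorem singleton (hφ : IsLColoring G L φ) {v : V} {x : ℕ} (hx : x ≠ φ v)
    (hφ' : IsLColoring G L (Function.update φ v x)) :
    RecolorsBy G L φ [(v, x)] (Function.update φ v x) :=
  cons hφ hx (nil hφ')

theorem exists_update (hφ : IsLColoring G L φ) {v : V} {x : ℕ}
    (hφ' : IsLColoring G L (Function.update φ v x)) :
    ∃ M, RecolorsBy G L φ M (Function.update φ v x) ∧ moveCount M ≤ Pi.single v 1 := by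
  obtain rfl | hx := eq_or_ne x (φ v)
  · exact ⟨[], by simpa using nil hφ, by simp⟩
  · exact ⟨_, singleton hφ hx hφ', by simp⟩

theorem apply_eq_of_moveCount_eq_zero (h : RecolorsBy G L φ M ψ) {v : V} (hv : moveCount M v = 0) :
    ψ v = φ v := by
  induction h with
  | nil _ => rfl
  | @cons φ ψ u x M _ _ _ ih =>
    obtain ⟨hvu, hM⟩ : v ≠ u ∧ moveCount M v = 0 := by simpa [Pi.single_apply] using hv
    rw [ih hM, Function.update_of_ne hvu]

end RecolorsBy

theorem recolorCount_succ {m : ℕ} (θ : Fin (m + 2) → V → ℕ) (v : V) :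
    recolorCount θ v = (if θ 0 v ≠ θ 1 v then 1 else 0) + recolorCount (Fin.tail θ) v := by
  simp only [recolorCount, Fin.card_filter_univ_succ', Fin.castSucc_zero, Fin.succ_zero_eq_one]
  rfl

variable [DecidableEq V]

theorem RecolorsBy.exists_isRecolSeq {M : List (V × ℕ)} (h : RecolorsBy G L φ M ψ) :
    ∃ (m : ℕ) (θ : Fin (m + 1) → V → ℕ), IsRecolSeq G L θ φ ψ ∧ recolorCount θ = moveCount M := by
  induction h with
  | @nil φ hφ =>
    exact ⟨0, fun _ => φ, ⟨rfl, rfl, fun _ => hφ, fun i => i.elim0⟩, by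
      ext v; simp [recolorCount]⟩
  | @cons φ ψ v x M hφ hx _ ih =>
    obtain ⟨m, θ, ⟨hzero, hlast, hcol, hstep⟩, hcount⟩ := ih
    have hone : (Fin.cons φ θ : Fin (m + 2) → V → ℕ) 1 = Function.update φ v x := hzero
    have hfirst : ∃! u, φ u ≠ (Fin.cons φ θ : Fin (m + 2) → V → ℕ) 1 u := by
      rw [hone]
      exact ⟨v, by simpa using hx.symm, fun u hu => by_contra fun huv => by simp [huv] at hu⟩
    refine ⟨m + 1, Fin.cons φ θ, ⟨rfl, by rw [← hlast]; rfl, Fin.cases hφ hcol,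
      Fin.cases hfirst hstep⟩, ?_⟩
    ext u
    rw [recolorCount_succ, Fin.tail_cons, hcount, moveCount_cons, Pi.add_apply, hone, Fin.cons_zero]
    obtain rfl | huv := eq_or_ne u v
    · simp [hx.symm]
    · simp [huv]

theorem IsRecolSeq.exists_recolorsBy {m : ℕ} {θ : Fin (m + 1) → V → ℕ} (h : IsRecolSeq G L θ φ ψ) :
    ∃ M, RecolorsBy G L φ M ψ ∧ moveCount M = recolorCount θ := by
  obtain ⟨rfl, rfl, hcol, hstep⟩ := h
  induction m with
  | zero => exact ⟨[], .nil (hcol 0), by ext v; simp [recolorCount]⟩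
  | succ m ih =>
    obtain ⟨M, hM, hcount⟩ := ih (θ := Fin.tail θ) (fun i => hcol i.succ) fun i => hstep i.succ
    obtain ⟨v, hv, hunique⟩ := hstep 0
    have hother : ∀ u ≠ v, θ 0 u = θ 1 u := fun u hu => by_contra fun hne => hu (hunique u hne)
    have hupdate : Fin.tail θ 0 = Function.update (θ 0) v (θ 1 v) := by
      refine (Function.update_eq_iff.2 ⟨rfl, fun u hu => ?_⟩).symm
      exact hother u hu
    refine ⟨(v, θ 1 v) :: M, .cons (hcol 0) (Ne.symm hv) (hupdate ▸ hM), ?_⟩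
    ext u
    rw [moveCount_cons, Pi.add_apply, hcount, recolorCount_succ]
    obtain rfl | huv := eq_or_ne u v
    · rw [Pi.single_eq_same, if_pos (show θ 0 u ≠ θ 1 u from hv)]
    · rw [Pi.single_eq_of_ne huv, if_neg (not_not.2 (hother u huv))]

end Moves

section FreeColors

theorem exists_mem_forall_ne_notMem {V C : Type*} {A : Finset C} {N : Finset V}
    {F : List C} (h : N.card + F.length < A.card) (φ : V → C) :
    ∃ x ∈ A, (∀ t ∈ N, φ t ≠ x) ∧ x ∉ F := by
  classical
  have hcard : (N.image φ ∪ F.toFinset).card < A.card :=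
    (Finset.card_union_le _ _).trans_lt <|
      (Nat.add_le_add Finset.card_image_le F.toFinset_card_le).trans_lt h
  obtain ⟨x, hxA, hx⟩ := Finset.exists_mem_notMem_of_card_lt_card hcard
  simp only [Finset.mem_union, Finset.mem_image, List.mem_toFinset, not_or, not_exists,
    not_and] at hx
  exact ⟨x, hxA, hx.1, hx.2⟩

theorem exists_isLColoring_update_notMem {V : Type} [DecidableEq V] {G : SimpleGraph V}
    {L : V → Finset ℕ} {φ : V → ℕ} (hφ : IsLColoring G L φ) {v : V} [Fintype (G.neighborSet v)]
    {F : List ℕ} (h : G.degree v + F.length < (L v).card) :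
    ∃ x ∉ F, IsLColoring G L (Function.update φ v x) := by
  obtain ⟨x, hxL, hxN, hxF⟩ := exists_mem_forall_ne_notMem (N := G.neighborFinset v) h φ
  exact ⟨x, hxF, hφ.update hxL fun t ht => hxN t ((G.mem_neighborFinset v t).2 ht)⟩

end FreeColors

section FinalPhase

variable {V : Type} [DecidableEq V] {G : SimpleGraph V} [G.LocallyFinite] {L : V → Finset ℕ}
  {φ β : V → ℕ}

theorem exists_recolorsBy_forall_ne (y : ℕ) (l : List V)
    (hdeg : ∀ v ∈ l, G.degree v + 1 < (L v).card) (hφ : IsLColoring G L φ) :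
    ∃ N ψ, RecolorsBy G L φ N ψ ∧ (∀ v ∈ l, ψ v ≠ y) ∧ ∀ v, moveCount N v ≤ l.count v := by
  induction l with
  | nil => exact ⟨[], φ, .nil hφ, by simp, by simp⟩
  | cons v l ih =>
    obtain ⟨N, ψ, hN, hψ, hcount⟩ := ih fun u hu => hdeg u (List.mem_cons_of_mem v hu)
    obtain ⟨x, hxy, hx⟩ := exists_isLColoring_update_notMem hN.isLColoring_right (F := [y])
      (hdeg v List.mem_cons_self)
    obtain ⟨M, hM, hMcount⟩ := RecolorsBy.exists_update hN.isLColoring_right hx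
    refine ⟨N ++ M, _, hN.append hM, fun u hu => ?_, fun u => ?_⟩
    · obtain rfl | huv := eq_or_ne u v
      · simpa using hxy
      · simpa [huv] using hψ u (List.mem_of_ne_of_mem huv hu)
    · have := hcount u
      have := hMcount u
      simp only [Pi.single_apply, eq_comm (a := u)] at this
      simp only [moveCount_append, Pi.add_apply, List.count_cons, beq_iff_eq]
      omega

-- Before `v` can receive `β v`, the other vertices of the list must give up that color.
theorem exists_recolorsBy_apply_eq (hβ : IsLColoring G L β) {v : V} {l : List V} (hv : v ∉ l)
    (hdeg : ∀ u ∈ l, G.degree u + 1 < (L u).card) (hφ : IsLColoring G L φ)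
    (hφβ : ∀ u ∉ v :: l, φ u = β u) :
    ∃ N ψ, RecolorsBy G L φ N ψ ∧ (∀ u ∉ l, ψ u = β u) ∧
      ∀ u, moveCount N u ≤ (v :: l).count u := by
  obtain ⟨N, ψ, hN, hψ, hcount⟩ := exists_recolorsBy_forall_ne (β v) l hdeg hφ
  have hout : ∀ u ∉ v :: l, ψ u = β u := fun u hu => by
    have hzero : l.count u = 0 := List.count_eq_zero.2 fun hul => hu (List.mem_cons_of_mem v hul)
    rw [hN.apply_eq_of_moveCount_eq_zero (Nat.le_zero.1 (hzero ▸ hcount u)), hφβ u hu]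
  have hupdate : IsLColoring G L (Function.update ψ v (β v)) := by
    refine hN.isLColoring_right.update (hβ.1 v) fun t ht => ?_
    by_cases htl : t ∈ l
    · exact hψ t htl
    · rw [hout t (by simp [ht.ne', htl])]
      exact (hβ.2 ht).symm
  obtain ⟨M, hM, hMcount⟩ := RecolorsBy.exists_update hN.isLColoring_right hupdate
  refine ⟨N ++ M, _, hN.append hM, fun u hu => ?_, fun u => ?_⟩
  · obtain rfl | huv := eq_or_ne u v
    · simp
    · simpa [huv] using hout u (by simp [huv, hu])
  · have := hcount u
    have := hMcount u
    simp only [Pi.single_apply, eq_comm (a := u)] at this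
    simp only [moveCount_append, Pi.add_apply, List.count_cons, beq_iff_eq]
    omega

theorem exists_recolorsBy_of_eq_off (hβ : IsLColoring G L β) {l : List V} (hl : l.Nodup)
    (hdeg : ∀ v ∈ l, G.degree v + 1 < (L v).card) (hφ : IsLColoring G L φ)
    (hφβ : ∀ u ∉ l, φ u = β u) :
    ∃ N, RecolorsBy G L φ N β ∧ (∀ u ∉ l, moveCount N u = 0) ∧
      ∀ (i : ℕ) (hi : i < l.length), moveCount N l[i] ≤ i + 1 := by
  induction l generalizing φ with
  | nil =>
    obtain rfl : φ = β := funext fun u => hφβ u List.not_mem_nil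
    exact ⟨[], .nil hφ, by simp, by simp⟩
  | cons v l ih =>
    obtain ⟨hv, hlnd⟩ := List.nodup_cons.1 hl
    have hdegl : ∀ u ∈ l, G.degree u + 1 < (L u).card := fun u hu =>
      hdeg u (List.mem_cons_of_mem v hu)
    obtain ⟨M, ψ, hM, hψ, hMcount⟩ := exists_recolorsBy_apply_eq hβ hv hdegl hφ hφβ
    obtain ⟨N, hN, hNout, hNcount⟩ := ih hlnd hdegl hM.isLColoring_right hψ
    refine ⟨M ++ N, hM.append hN, fun u hu => ?_, fun i hi => ?_⟩
    · have hMu := hMcount u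
      rw [List.count_eq_zero.2 hu] at hMu
      simp [Nat.le_zero.1 hMu, hNout u fun hul => hu (List.mem_cons_of_mem v hul)]
    · have hMi := (hMcount (v :: l)[i]).trans (List.nodup_iff_count_le_one.1 hl _)
      rw [moveCount_append, Pi.add_apply]
      cases i with
      | zero => simpa [hNout v hv] using hMi
      | succ i =>
        exact (Nat.add_le_add hMi (hNcount i (Nat.lt_of_succ_lt_succ hi))).trans (by omega)

end FinalPhase

/-- The account of one vertex of color `c` that still has to dodge the colors `A` in this order. It
has slack `s`, has moved `n` times, of which `q ≤ Q` times with help, and has helped others `X`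
times; `ℓ` bounds the number of colors it had to dodge at the start. A free move clears `s` colors
and a helped move `s + 1`. Helping costs at most `s + 2`: a move, to be paid with `s`, clears only
`s - 1` colors and gives up a window of up to `s + 1`. -/
structure Budget (s Q ℓ : ℕ) (A : List ℕ) (c n q X : ℕ) : Prop where
  helped_le : q ≤ Q
  moves_le : q < Q → n ≤ q + X
  /-- The window `w` may extend beyond the end of `A`. -/
  exists_window : ∃ w ≤ s + 1, c ∉ A.take w ∧ s * n + A.length + q ≤ w + ℓ + (s + 2) * X

namespace Budget

variable {s Q ℓ : ℕ} {A : List ℕ} {c n q X y c' : ℕ}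

theorem init (hA : A.length ≤ ℓ) : Budget s Q ℓ A c 0 0 0 :=
  ⟨Nat.zero_le _, fun _ => Nat.zero_le _, 0, Nat.zero_le _, by simp, by simpa using hA⟩

theorem of_cons (h : Budget s Q ℓ (y :: A) c n q X) : Budget s Q ℓ A c n q X := by
  obtain ⟨hq, hn, w, hw, hc, hcost⟩ := h
  rw [List.length_cons] at hcost
  refine ⟨hq, hn, w - 1, by omega, ?_, by omega⟩
  cases w with
  | zero => simp
  | succ w => exact fun hmem => hc (by simpa using Or.inr hmem)

theorem le_of_head (h : Budget s Q ℓ (c :: A) c n q X) :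
    s * n + (c :: A).length + q ≤ ℓ + (s + 2) * X := by
  obtain ⟨-, -, w, -, hc, hcost⟩ := h
  cases w with
  | zero => simpa using hcost
  | succ w => simp at hc

theorem freeMove (h : Budget s Q ℓ (c :: A) c n q X) (hq : Q ≤ q) (hc' : c' ∉ (c :: A).take s) :
    Budget s Q ℓ (c :: A) c' (n + 1) q X := by
  have hcost := h.le_of_head
  exact ⟨h.helped_le, fun hlt => absurd hlt hq.not_gt, s, by omega, hc', by
    rw [Nat.mul_add]; omega⟩

theorem helpedMove (h : Budget s Q ℓ (c :: A) c n q X) (hq : q < Q)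
    (hc' : c' ∉ (c :: A).take (s + 1)) : Budget s Q ℓ (c :: A) c' (n + 1) (q + 1) X := by
  have hcost := h.le_of_head
  have hn := h.moves_le hq
  exact ⟨hq, fun _ => by omega, s + 1, le_rfl, hc', by rw [Nat.mul_add]; omega⟩

theorem help (h : Budget s Q ℓ A c n q X) : Budget s Q ℓ A c n q (X + 1) := by
  obtain ⟨hq, hn, w, hw, hc, hcost⟩ := h
  exact ⟨hq, fun hlt => (hn hlt).trans (by omega), w, hw, hc, by rw [Nat.mul_add (s + 2)]; omega⟩

theorem helpMove (h : Budget s Q ℓ A c n q X) (hc' : c' ∉ A.take (s - 1)) :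
    Budget s Q ℓ A c' (n + 1) q (X + 1) := by
  obtain ⟨hq, hn, w, hw, -, hcost⟩ := h
  exact ⟨hq, fun hlt => by have := hn hlt; omega, s - 1, by omega, hc', by
    rw [Nat.mul_add, Nat.mul_add (s + 2)]; omega⟩

theorem cost_le (h : Budget s Q ℓ A c n q X) : s * n + q ≤ s + 1 + ℓ + (s + 2) * X := by
  obtain ⟨-, -, w, hw, -, hcost⟩ := h
  omega

end Budget

theorem ne_of_notMem_take_cons {C : Type*} {A : List C} {c y : C} {m : ℕ} (hm : 0 < m)
    (h : y ∉ (c :: A).take m) : y ≠ c := by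
  rintro rfl
  cases m with
  | zero => exact hm.false
  | succ m => simp at h

section Upcoming

variable {V : Type} {T : Set V} (G : SimpleGraph V)

/-- The colors that the moves of `E` will place on neighbors of `v`, in chronological order. -/
def upcoming [DecidableRel G.Adj] (v : V) (E : List (T × ℕ)) : List ℕ :=
  (E.filter fun p => G.Adj v p.1).map Prod.snd

variable {G} {v : V}

theorem upcoming_cons_of_adj [DecidableRel G.Adj] {p : T × ℕ} (h : G.Adj v p.1)
    (E : List (T × ℕ)) : upcoming G v (p :: E) = p.2 :: upcoming G v E := by
  simp [upcoming, h]

theorem upcoming_cons_of_not_adj [DecidableRel G.Adj] {p : T × ℕ} (h : ¬ G.Adj v p.1)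
    (E : List (T × ℕ)) : upcoming G v (p :: E) = upcoming G v E := by
  simp [upcoming, h]

theorem length_upcoming_le_sum [DecidableEq V] [DecidableRel G.Adj] (E : List (T × ℕ))
    {W : Finset T} (hW : ∀ u : T, G.Adj v u → u ∈ W) :
    (upcoming G v E).length ≤ ∑ u ∈ W, moveCount E u := by
  set F := E.filter fun p => G.Adj v p.1 with hF
  have hmem : ∀ u ∈ (F.map Prod.fst : Multiset T), u ∈ W := by
    intro u hu
    obtain ⟨p, hp, rfl⟩ := List.mem_map.1 (Multiset.mem_coe.1 hu)
    exact hW _ (by simpa using (List.mem_filter.1 hp).2)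
  calc (upcoming G v E).length = (F.map Prod.fst : Multiset T).card := by simp [upcoming, hF]
    _ = ∑ u ∈ W, moveCount F u := by
      simpa [moveCount] using (Multiset.sum_count_eq_card hmem).symm
    _ ≤ ∑ u ∈ W, moveCount E u := Finset.sum_le_sum fun u _ =>
      moveCount_le_of_sublist List.filter_sublist u

theorem length_upcoming_le [DecidableEq V] [DecidableRel G.Adj] [Fintype (G.neighborSet v)]
    {E : List (T × ℕ)} {k o : ℕ} (hk : ∀ u, moveCount E u ≤ k) {I : Finset V}
    (hI : ∀ u ∈ I, G.Adj v u ∧ u ∉ T) (ho : G.degree v ≤ I.card + o) :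
    (upcoming G v E).length ≤ o * k := by
  classical
  have hcard : ((G.neighborFinset v).subtype (· ∈ T)).card ≤ o := by
    rw [Finset.card_subtype]
    have hdisj : Disjoint I ((G.neighborFinset v).filter (· ∈ T)) :=
      Finset.disjoint_left.2 fun u hu hu' => (hI u hu).2 (Finset.mem_filter.1 hu').2
    have hsub : I ∪ (G.neighborFinset v).filter (· ∈ T) ⊆ G.neighborFinset v :=
      Finset.union_subset (fun u hu => by simpa using (hI u hu).1) (Finset.filter_subset _ _)
    have hle := Finset.card_le_card hsub
    rw [Finset.card_union_of_disjoint hdisj, G.card_neighborFinset_eq_degree] at hle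
    omega
  calc (upcoming G v E).length
      ≤ ∑ u ∈ (G.neighborFinset v).subtype (· ∈ T), moveCount E u :=
        length_upcoming_le_sum E (by simp)
    _ ≤ ((G.neighborFinset v).subtype (· ∈ T)).card * k :=
        Finset.sum_le_card_nsmul _ _ k fun u _ => hk u
    _ ≤ o * k := Nat.mul_le_mul_right k hcard

end Upcoming

section Conflicts

variable {V ι : Type} [Fintype ι] {G : SimpleGraph V} [DecidableRel G.Adj] {x : ι → V} {T : Set V}
  {p : T × ℕ} {φ : V → ℕ} {i : ι}

/-- The indices of the vertices `x i` that obstruct the move `p`. -/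
def conflicts (x : ι → V) (G : SimpleGraph V) [DecidableRel G.Adj] (p : T × ℕ) (φ : V → ℕ) :
    Finset ι :=
  {i | G.Adj (x i) p.1 ∧ φ (x i) = p.2}

theorem mem_conflicts : i ∈ conflicts x G p φ ↔ G.Adj (x i) p.1 ∧ φ (x i) = p.2 := by
  simp [conflicts]

theorem conflicts_ssubset {φ' : V → ℕ} (hi : i ∈ conflicts x G p φ) (hφ' : φ' (x i) ≠ p.2)
    (h : ∀ j ≠ i, j ∈ conflicts x G p φ' → j ∈ conflicts x G p φ) :
    conflicts x G p φ' ⊂ conflicts x G p φ := by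
  have hi' : i ∉ conflicts x G p φ' := fun hmem => hφ' (mem_conflicts.1 hmem).2
  refine (Finset.ssubset_iff_of_subset fun j hj => h j ?_ hj).2 ⟨i, hi, hi'⟩
  rintro rfl
  exact hi' hj

theorem isLColoring_update_of_conflicts_eq_empty [DecidableEq V] {L : V → Finset ℕ}
    {p : ↥(Set.range x)ᶜ × ℕ} (hφ : IsLColoring G L φ)
    (hempty : conflicts x G p φ = ∅)
    (hp : IsLColoring (G.induce (Set.range x)ᶜ) (fun u => L u)
      (Function.update (fun u : ↥(Set.range x)ᶜ => φ u) p.1 p.2)) :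
    IsLColoring G L (Function.update φ p.1 p.2) := by
  refine hφ.update (by simpa using hp.1 p.1) fun t ht hcol => ?_
  by_cases htx : t ∈ Set.range x
  · obtain ⟨i, rfl⟩ := htx
    exact Finset.notMem_empty i (hempty ▸ mem_conflicts.2 ⟨ht.symm, hcol⟩)
  · have hadj : (G.induce (Set.range x)ᶜ).Adj p.1 ⟨t, htx⟩ := ht
    exact hp.2 hadj (by simpa [Subtype.ext_iff, ht.ne'] using hcol.symm)

end Conflicts

/-- A strategy for extending recolorings to the vertices `x i`: vertex `x i` has `slack i` colors to
spare beyond the first one unused on its neighborhood, and for its first `quota i` moves it ignores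
the color of its neighbor `x (helper i)`, which steps aside if necessary. -/
structure HelpPlan {V ι : Type} (G : SimpleGraph V) [G.LocallyFinite] (L : V → Finset ℕ)
    (x : ι → V) where
  /-- The number of upcoming colors a free move can avoid. -/
  slack : ι → ℕ
  /-- The number of moves made with help. -/
  quota : ι → ℕ
  /-- The index of the helping neighbor; irrelevant where the quota is zero. -/
  helper : ι → ι
  two_le_slack : ∀ i, 2 ≤ slack i
  degree_add_slack_lt : ∀ i, G.degree (x i) + slack i < (L (x i)).card
  adj_helper : ∀ i, 0 < quota i → G.Adj (x i) (x (helper i))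

namespace HelpPlan

variable {V ι : Type} {G : SimpleGraph V} [G.LocallyFinite] {L : V → Finset ℕ} {x : ι → V}
  {P : HelpPlan G L x} {φ : V → ℕ} {i : ι}

theorem exists_color_notMem_of_helper (hi : 0 < P.quota i) (φ : V → ℕ) (A : List ℕ) :
    ∃ y ∈ L (x i), (∀ t, G.Adj (x i) t → t ≠ x (P.helper i) → φ t ≠ y) ∧
      y ∉ A.take (P.slack i + 1) := by
  classical
  have hhelper : x (P.helper i) ∈ G.neighborFinset (x i) := by simpa using P.adj_helper i hi
  obtain ⟨y, hyL, hyN, hyA⟩ := exists_mem_forall_ne_notMem (A := L (x i))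
    (N := (G.neighborFinset (x i)).erase (x (P.helper i))) (F := A.take (P.slack i + 1)) (by
      have := A.length_take_le (P.slack i + 1)
      have := P.degree_add_slack_lt i
      have := Finset.card_erase_add_one hhelper
      rw [G.card_neighborFinset_eq_degree] at this
      omega) φ
  exact ⟨y, hyL, fun t ht hne => hyN t (by simp [ht, hne]), hyA⟩

theorem exists_stepAside [DecidableEq V] (hφ : IsLColoring G L φ) (y : ℕ) {ℓ n q X : ℕ} {A : List ℕ}
    (h : Budget (P.slack i) (P.quota i) ℓ A (φ (x i)) n q X) :
    ∃ N z, RecolorsBy G L φ N (Function.update φ (x i) z) ∧ (∀ m ∈ N, m.1 = x i) ∧ z ≠ y ∧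
      (z = φ (x i) ∨ z ∉ A.take 1) ∧
      Budget (P.slack i) (P.quota i) ℓ A z (n + moveCount N (x i)) q (X + 1) := by
  obtain hy | hy := ne_or_eq (φ (x i)) y
  · exact ⟨[], φ (x i), by simpa using .nil hφ, by simp, hy, .inl rfl, by simpa using h.help⟩
  have hslack := P.two_le_slack i
  obtain ⟨z, hz, hφ'⟩ := exists_isLColoring_update_notMem hφ (v := x i)
    (F := y :: A.take (P.slack i - 1)) (by
      have := A.length_take_le (P.slack i - 1)
      have := P.degree_add_slack_lt i
      rw [List.length_cons]
      omega)
  obtain ⟨hzy, hzA⟩ := not_or.1 (mt List.mem_cons.2 hz)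
  refine ⟨[(x i, z)], z, .singleton hφ (hy ▸ hzy) hφ', by simp, hzy,
    .inr fun hmem => hzA (List.take_subset_take_left A (by omega) hmem), ?_⟩
  simpa using h.helpMove hzA

variable [Fintype ι] [DecidableEq ι]

/-- The number of times that `x i` has been asked for help once every `x j` has made `q j` helped
moves. -/
def helpGiven (P : HelpPlan G L x) (q : ι → ℕ) (i : ι) : ℕ :=
  ∑ j with P.helper j = i, q j

/-- The numbers `n` of moves and `q` of helped moves of the vertices `x i` that the accounts allow,
given the loads `ℓ`. -/
structure IsFeasible (P : HelpPlan G L x) (ℓ n q : ι → ℕ) : Prop where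
  helped_le : ∀ i, q i ≤ P.quota i
  moves_le : ∀ i, q i < P.quota i → n i ≤ q i + P.helpGiven q i
  cost_le : ∀ i, P.slack i * n i + q i ≤ P.slack i + 1 + ℓ i + (P.slack i + 2) * P.helpGiven q i

theorem helpGiven_add_single (P : HelpPlan G L x) (q : ι → ℕ) (i : ι) :
    P.helpGiven (q + Pi.single i 1) = P.helpGiven q + Pi.single (P.helper i) 1 := by
  ext j
  simp [helpGiven, Finset.sum_add_distrib, Pi.single_apply, eq_comm]

variable [DecidableRel G.Adj]

/-- The accounts of all vertices `x i` are in order, given the loads `ℓ`, the moves `E` outside that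
are still to come, the coloring `φ`, and the numbers `n` of moves and `q` of helped moves. -/
def Balanced (P : HelpPlan G L x) (ℓ : ι → ℕ) (E : List (↥(Set.range x)ᶜ × ℕ)) (φ n : V → ℕ)
    (q : ι → ℕ) : Prop :=
  ∀ i, Budget (P.slack i) (P.quota i) (ℓ i) (upcoming G (x i) E) (φ (x i)) (n (x i)) (q i)
    (P.helpGiven q i)

variable {ℓ : ι → ℕ} {p : ↥(Set.range x)ᶜ × ℕ} {E : List (↥(Set.range x)ᶜ × ℕ)} {n : V → ℕ}
  {q : ι → ℕ}

theorem Balanced.budget_of_mem_conflicts (h : P.Balanced ℓ (p :: E) φ n q)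
    (hi : i ∈ conflicts x G p φ) :
    Budget (P.slack i) (P.quota i) (ℓ i) (φ (x i) :: upcoming G (x i) E) (φ (x i)) (n (x i)) (q i)
      (P.helpGiven q i) := by
  obtain ⟨hadj, hcol⟩ := mem_conflicts.1 hi
  have hbudget := h i
  rwa [upcoming_cons_of_adj hadj, ← hcol] at hbudget

variable [DecidableEq V]

/-- The moves `N` involve only the vertices `x i`, lead from `φ` to `φ'` and keep the accounts in
order, `q'` being the numbers of helped moves afterwards. -/
structure IsResponse (P : HelpPlan G L x) (ℓ : ι → ℕ) (E : List (↥(Set.range x)ᶜ × ℕ))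
    (φ n : V → ℕ) (q : ι → ℕ) (N : List (V × ℕ)) (φ' : V → ℕ) (q' : ι → ℕ) : Prop where
  recolorsBy : RecolorsBy G L φ N φ'
  mem_range : ∀ m ∈ N, m.1 ∈ Set.range x
  balanced : P.Balanced ℓ E φ' (n + moveCount N) q'

namespace IsResponse

variable {N N' : List (V × ℕ)} {φ' φ'' : V → ℕ} {q' q'' : ι → ℕ}

theorem trans (h : P.IsResponse ℓ E φ n q N φ' q')
    (h' : P.IsResponse ℓ E φ' (n + moveCount N) q' N' φ'' q'') :
    P.IsResponse ℓ E φ n q (N ++ N') φ'' q'' where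
  recolorsBy := h.recolorsBy.append h'.recolorsBy
  mem_range m hm := (List.mem_append.1 hm).elim (h.mem_range m) (h'.mem_range m)
  balanced := by
    rw [moveCount_append, ← add_assoc]
    exact h'.balanced

theorem moveCount_eq_zero (h : P.IsResponse ℓ E φ n q N φ' q') (u : ↥(Set.range x)ᶜ) :
    moveCount N u = 0 :=
  _root_.moveCount_eq_zero fun m hm hmu => u.2 (hmu ▸ h.mem_range m hm)

theorem apply_eq (h : P.IsResponse ℓ E φ n q N φ' q') (u : ↥(Set.range x)ᶜ) : φ' u = φ u :=
  h.recolorsBy.apply_eq_of_moveCount_eq_zero (h.moveCount_eq_zero u)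

end IsResponse

theorem exists_isResponse_freeMove (hx : Function.Injective x) (hφ : IsLColoring G L φ)
    (hbal : P.Balanced ℓ (p :: E) φ n q) (hi : i ∈ conflicts x G p φ) (hq : P.quota i ≤ q i) :
    ∃ N φ' q', P.IsResponse ℓ (p :: E) φ n q N φ' q' ∧
      conflicts x G p φ' ⊂ conflicts x G p φ := by
  obtain ⟨hadj, hcol⟩ := mem_conflicts.1 hi
  have hslack := P.two_le_slack i
  obtain ⟨y, hy, hφ'⟩ := exists_isLColoring_update_notMem hφ
    (F := (φ (x i) :: upcoming G (x i) E).take (P.slack i))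
    ((Nat.add_le_add_left (List.length_take_le _ _) _).trans_lt (P.degree_add_slack_lt i))
  have hyφ : y ≠ φ (x i) := ne_of_notMem_take_cons (by omega) hy
  refine ⟨[(x i, y)], _, q, ⟨.singleton hφ hyφ hφ', by simp, fun j => ?_⟩,
    conflicts_ssubset hi (by simpa [← hcol]) fun j hj => by simp [mem_conflicts, hx.eq_iff, hj]⟩
  obtain rfl | hj := eq_or_ne j i
  · simpa [upcoming_cons_of_adj hadj, ← hcol] using (hbal.budget_of_mem_conflicts hi).freeMove hq hy
  · simpa [hx.eq_iff, hj] using hbal j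

theorem exists_isResponse_helpedMove (hx : Function.Injective x) (hφ : IsLColoring G L φ)
    (hbal : P.Balanced ℓ (p :: E) φ n q) (hi : i ∈ conflicts x G p φ) (hq : q i < P.quota i) :
    ∃ N φ' q', P.IsResponse ℓ (p :: E) φ n q N φ' q' ∧
      conflicts x G p φ' ⊂ conflicts x G p φ := by
  obtain ⟨hadj, hcol⟩ := mem_conflicts.1 hi
  have hquota : 0 < P.quota i := by omega
  have hhi : P.helper i ≠ i := fun h => (P.adj_helper i hquota).ne (congrArg x h.symm)
  obtain ⟨y, hyL, hyN, hyA⟩ :=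
    exists_color_notMem_of_helper hquota φ (φ (x i) :: upcoming G (x i) E)
  have hyφ : y ≠ φ (x i) := ne_of_notMem_take_cons (Nat.succ_pos _) hyA
  obtain ⟨N, z, hN, hNmem, hzy, hzA, hzbudget⟩ := exists_stepAside hφ y (hbal (P.helper i))
  have hNcount : ∀ j ≠ P.helper i, moveCount N (x j) = 0 := fun j hj =>
    moveCount_eq_zero fun m hm hmj => hj (hx (hmj.symm.trans (hNmem m hm)))
  have hφ' := hN.isLColoring_right.update hyL fun t ht => by
    obtain rfl | hth := eq_or_ne t (x (P.helper i))
    · simpa using hzy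
    · simpa [hth] using hyN t ht hth
  refine ⟨N ++ [(x i, y)], _, q + Pi.single i 1,
    ⟨hN.append (.singleton hN.isLColoring_right (by simpa [hx.eq_iff, hhi.symm] using hyφ) hφ'),
      fun m hm => ?_, fun j => ?_⟩, conflicts_ssubset hi (by simpa [← hcol]) fun j hj hmem => ?_⟩
  · obtain hm | rfl := by simpa only [List.mem_append, List.mem_singleton] using hm
    · exact ⟨_, (hNmem m hm).symm⟩
    · exact ⟨i, rfl⟩
  · rw [helpGiven_add_single]
    obtain rfl | hj := eq_or_ne j i
    · simpa [upcoming_cons_of_adj hadj, ← hcol, hNcount j hhi.symm, hhi.symm] using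
        (hbal.budget_of_mem_conflicts hi).helpedMove hq hyA
    · obtain rfl | hjh := eq_or_ne j (P.helper i)
      · simpa [hx.eq_iff, hj] using hzbudget
      · simpa [hx.eq_iff, hj, hjh, hNcount j hjh] using hbal j
  · obtain ⟨hjadj, hjcol⟩ := mem_conflicts.1 hmem
    obtain rfl | hjh := eq_or_ne j (P.helper i)
    · obtain rfl : z = p.2 := by simpa [hx.eq_iff, hj] using hjcol
      refine mem_conflicts.2 ⟨hjadj, (hzA.resolve_right ?_).symm⟩
      simp [upcoming_cons_of_adj hjadj]
    · exact mem_conflicts.2 ⟨hjadj, by simpa [hx.eq_iff, hj, hjh] using hjcol⟩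

theorem exists_isResponse_conflicts_eq_empty (hx : Function.Injective x) (hφ : IsLColoring G L φ)
    (hbal : P.Balanced ℓ (p :: E) φ n q) :
    ∃ N φ' q', P.IsResponse ℓ (p :: E) φ n q N φ' q' ∧ conflicts x G p φ' = ∅ := by
  obtain ⟨m, hm⟩ : ∃ m, (conflicts x G p φ).card = m := ⟨_, rfl⟩
  induction m using Nat.strong_induction_on generalizing φ n q with
  | _ m ih =>
    obtain hempty | ⟨i, hi⟩ := (conflicts x G p φ).eq_empty_or_nonempty
    · exact ⟨[], φ, q, ⟨.nil hφ, by simp, by simpa using hbal⟩, hempty⟩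
    obtain ⟨N, φ₁, q₁, h₁, hlt⟩ : ∃ N φ' q', P.IsResponse ℓ (p :: E) φ n q N φ' q' ∧
        conflicts x G p φ' ⊂ conflicts x G p φ := by
      obtain hq | hq := lt_or_ge (q i) (P.quota i)
      · exact exists_isResponse_helpedMove hx hφ hbal hi hq
      · exact exists_isResponse_freeMove hx hφ hbal hi hq
    obtain ⟨N', φ₂, q₂, h₂, hempty⟩ :=
      ih _ (hm ▸ Finset.card_lt_card hlt) h₁.recolorsBy.isLColoring_right h₁.balanced rfl
    exact ⟨N ++ N', φ₂, q₂, h₁.trans h₂, hempty⟩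

theorem Balanced.outerMove (h : P.Balanced ℓ (p :: E) φ n q) :
    P.Balanced ℓ E (Function.update φ p.1 p.2) (n + Pi.single (p.1 : V) 1) q := fun i => by
  have hne : x i ≠ p.1 := fun h => p.1.2 ⟨i, h⟩
  have hbudget := h i
  by_cases hadj : G.Adj (x i) p.1
  · rw [upcoming_cons_of_adj hadj] at hbudget
    simpa [hne] using hbudget.of_cons
  · rw [upcoming_cons_of_not_adj hadj] at hbudget
    simpa [hne] using hbudget

-- Each move outside is performed as soon as the vertices `x i` obstructing it have dodged.
theorem exists_recolorsBy_balanced (hx : Function.Injective x) {β : V → ℕ}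
    (hφ : IsLColoring G L φ) (hbal : P.Balanced ℓ E φ n q)
    (hE : RecolorsBy (G.induce (Set.range x)ᶜ) (fun u => L u) (fun u => φ u) E (fun u => β u)) :
    ∃ N ψ q', RecolorsBy G L φ N ψ ∧ P.Balanced ℓ [] ψ (n + moveCount N) q' ∧
      ∀ u : ↥(Set.range x)ᶜ, ψ u = β u ∧ moveCount N u = moveCount E u := by
  induction E generalizing φ n q with
  | nil =>
    exact ⟨[], φ, q, .nil hφ, by simpa using hbal, fun u => ⟨congrFun hE.eq_of_nil u, rfl⟩⟩
  | cons p E ih =>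
    obtain ⟨N₁, φ₁, q₁, h₁, hempty⟩ := exists_isResponse_conflicts_eq_empty hx hφ hbal
    have hrestrict : (fun u : ↥(Set.range x)ᶜ => φ₁ u) =
        fun u : ↥(Set.range x)ᶜ => φ u := funext h₁.apply_eq
    rw [← hrestrict] at hE
    cases hE with
    | @cons _ _ v y _ _ hy hE =>
    have hφ₂ := isLColoring_update_of_conflicts_eq_empty h₁.recolorsBy.isLColoring_right hempty
      hE.isLColoring_left
    have hmove := RecolorsBy.singleton h₁.recolorsBy.isLColoring_right hy hφ₂
    have hupdate : Function.update (fun u : ↥(Set.range x)ᶜ => φ₁ u) v y =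
        fun u : ↥(Set.range x)ᶜ => Function.update φ₁ v y u :=
      (Function.update_comp_eq_of_injective φ₁ Subtype.val_injective v y).symm
    rw [hupdate] at hE
    obtain ⟨N₂, ψ, q₂, hN₂, hbal₂, hψ⟩ := ih hφ₂ h₁.balanced.outerMove hE
    refine ⟨N₁ ++ (_ ++ N₂), ψ, q₂, h₁.recolorsBy.append (hmove.append hN₂), ?_, fun u => ?_⟩
    · simpa [add_assoc] using hbal₂
    · refine ⟨(hψ u).1, ?_⟩
      simp [h₁.moveCount_eq_zero u, (hψ u).2, Pi.single_apply, Subtype.ext_iff]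

theorem exists_recolorsBy_isFeasible (P : HelpPlan G L x) (hx : Function.Injective x) {β : V → ℕ}
    {M : List (↥(Set.range x)ᶜ × ℕ)} (hα : IsLColoring G L φ)
    (hM : RecolorsBy (G.induce (Set.range x)ᶜ) (fun u => L u) (fun u => φ u) M (fun u => β u))
    (hload : ∀ i, (upcoming G (x i) M).length ≤ ℓ i) :
    ∃ N ψ q, RecolorsBy G L φ N ψ ∧ P.IsFeasible ℓ (fun i => moveCount N (x i)) q ∧
      ∀ u : ↥(Set.range x)ᶜ, ψ u = β u ∧ moveCount N u = moveCount M u := by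
  have hbal : P.Balanced ℓ M φ 0 0 := fun i => by
    simpa [helpGiven] using Budget.init (hload i)
  obtain ⟨N, ψ, q, hN, hbal', hψ⟩ := exists_recolorsBy_balanced hx hα hbal hM
  rw [zero_add] at hbal'
  exact ⟨N, ψ, q, hN, ⟨fun i => (hbal' i).helped_le, fun i => (hbal' i).moves_le,
    fun i => (hbal' i).cost_le⟩, hψ⟩

end HelpPlan

-- The final phase visits the vertices in the order of their indices and moves `x i` at most `i + 1`
-- times.
theorem HelpPlan.exists_isRecolSeq {V : Type} {G : SimpleGraph V} [G.LocallyFinite]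
    {L : V → Finset ℕ} {s k : ℕ} {x : Fin s → V} (P : HelpPlan G L x)
    (hx : Function.Injective x) {inner : Fin s → Finset (Fin s)} {o : Fin s → ℕ}
    (hinner : ∀ i, ∀ j ∈ inner i, G.Adj (x i) (x j))
    (hdeg : ∀ i, G.degree (x i) ≤ (inner i).card + o i)
    (hfeasible : ∀ n q, P.IsFeasible (fun i => o i * k) n q → ∀ i, n i + i + 1 ≤ k)
    {α β : V → ℕ} (hα : IsLColoring G L α) (hβ : IsLColoring G L β) {m : ℕ}
    {θ : Fin (m + 1) → ↥(Set.range x)ᶜ → ℕ}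
    (hθ : IsRecolSeq (G.induce (Set.range x)ᶜ) (fun u => L u) θ (fun u => α u) (fun u => β u))
    (hcount : ∀ u, recolorCount θ u ≤ k) :
    ∃ (m' : ℕ) (θ' : Fin (m' + 1) → V → ℕ),
      IsRecolSeq G L θ' α β ∧ ∀ u, recolorCount θ' u ≤ k := by
  classical
  obtain ⟨M, hM, hMcount⟩ := hθ.exists_recolorsBy
  have hload : ∀ i, (upcoming G (x i) M).length ≤ o i * k := fun i =>
    length_upcoming_le (hMcount ▸ hcount) (I := (inner i).map ⟨x, hx⟩)
      (by simpa using hinner i) (by simpa using hdeg i)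
  obtain ⟨N, ψ, q, hN, hNq, hψ⟩ := P.exists_recolorsBy_isFeasible hx hα hM hload
  have hofFn : ∀ u, u ∉ List.ofFn x ↔ u ∉ Set.range x := by simp [List.mem_ofFn]
  obtain ⟨N', hN', hout, hin⟩ := exists_recolorsBy_of_eq_off hβ
    (List.nodup_ofFn.2 hx)
    (List.forall_mem_ofFn_iff.2 fun i => by
      have := P.two_le_slack i
      have := P.degree_add_slack_lt i
      omega)
    hN.isLColoring_right fun u hu => (hψ ⟨u, (hofFn u).1 hu⟩).1
  obtain ⟨m', θ', hθ', hθ'count⟩ := (hN.append hN').exists_isRecolSeq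
  refine ⟨m', θ', hθ', fun u => ?_⟩
  rw [hθ'count, moveCount_append, Pi.add_apply]
  by_cases hu : u ∈ Set.range x
  · obtain ⟨i, rfl⟩ := hu
    have hi := hin i (by simp)
    simp only [List.getElem_ofFn, Fin.eta] at hi
    have := hfeasible _ q hNq i
    omega
  · rw [hout u ((hofFn u).2 hu), (hψ ⟨u, hu⟩).2, hMcount]
    exact hcount _

section SixVertices

variable {V : Type} {G : SimpleGraph V} [G.LocallyFinite] {L : V → Finset ℕ} {a b c d e f : V}

/-- The strategy for the configuration of the theorem, with the vertices in the order
`f, e, d, b, c, a`: `c`, which has only two neighbors outside, helps `e`, `d` and `b`, and `e` helps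
`f`. The quotas balance the numbers of moves of the helpers and the helped. -/
def sixVertexPlan (hL : ∀ u, 10 ≤ (L u).card) (hbc : G.Adj b c) (hcd : G.Adj c d) (hef : G.Adj e f)
    (hce : G.Adj c e)
    (hdeg : ∀ i, G.degree (![f, e, d, b, c, a] i) ≤ ![5, 6, 6, 6, 6, 5] i) :
    HelpPlan G L ![f, e, d, b, c, a] where
  slack := ![4, 3, 3, 3, 3, 4]
  quota := ![6, 38, 11, 14, 0, 0]
  helper := ![1, 4, 4, 4, 4, 5]
  two_le_slack := by decide
  degree_add_slack_lt i := by
    have hnine : ![5, 6, 6, 6, 6, 5] i + ![4, 3, 3, 3, 3, 4] i = 9 := by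
      revert i
      decide
    have := hdeg i
    have := hL (![f, e, d, b, c, a] i)
    omega
  adj_helper := by simp [Fin.forall_fin_succ, hbc, hcd.symm, hef.symm, hce.symm]

variable {hL : ∀ u, 10 ≤ (L u).card} {hbc : G.Adj b c} {hcd : G.Adj c d} {hef : G.Adj e f}
  {hce : G.Adj c e} {hdeg : ∀ i, G.degree (![f, e, d, b, c, a] i) ≤ ![5, 6, 6, 6, 6, 5] i}

theorem helpGiven_sixVertexPlan (q : Fin 6 → ℕ) :
    (sixVertexPlan hL hbc hcd hef hce hdeg).helpGiven q =
      ![0, q 0, 0, 0, q 1 + q 2 + q 3 + q 4, q 5] := by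
  ext i
  rw [HelpPlan.helpGiven, Finset.sum_filter]
  fin_cases i <;> simp [sixVertexPlan, Fin.sum_univ_succ, add_assoc]

theorem moves_le_of_isFeasible_sixVertexPlan {k : ℕ} (hk : 332 ≤ k) {n q : Fin 6 → ℕ}
    (h : (sixVertexPlan hL hbc hcd hef hce hdeg).IsFeasible (fun i => ![4, 3, 3, 3, 2, 3] i * k)
      n q) (i : Fin 6) : n i + i + 1 ≤ k := by
  obtain ⟨hhelped, hmoves, hcost⟩ := h
  revert i
  simp only [helpGiven_sixVertexPlan] at hmoves hcost
  simp only [sixVertexPlan, Fin.forall_fin_succ, Matrix.cons_val_zero, Matrix.cons_val_succ,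
    Fin.succ_zero_eq_one, Fin.succ_one_eq_two, Fin.reduceSucc, Fin.isValue, Nat.reduceAdd,
    Matrix.cons_val_fin_one, IsEmpty.forall_iff, and_true, Fin.coe_ofNat_eq_mod,
    Fin.val_succ] at hhelped hmoves hcost ⊢
  omega

end SixVertices

theorem stmt_10_general {V : Type} (G : SimpleGraph V) [G.LocallyFinite] (k : ℕ) (hk : 332 ≤ k)
    (L : V → Finset ℕ) (hL : ∀ u, 10 ≤ (L u).card) (α β : V → ℕ) (hα : IsLColoring G L α)
    (hβ : IsLColoring G L β) (a b c d e f : V) (hnodup : ([a, b, c, d, e, f] : List V).Nodup)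
    (hab : G.Adj a b) (hbc : G.Adj b c) (hcd : G.Adj c d) (hde : G.Adj d e) (hef : G.Adj e f)
    (hac : G.Adj a c) (hbd : G.Adj b d) (hce : G.Adj c e) (hdega : G.degree a ≤ 5)
    (hdegb : G.degree b ≤ 6) (hdegc : G.degree c ≤ 6) (hdegd : G.degree d ≤ 6)
    (hdege : G.degree e ≤ 6) (hdegf : G.degree f ≤ 5) (S : Set V) (hS : S = {a, b, c, d, e, f})
    (hrec : ∃ (m : ℕ) (φ : Fin (m + 1) → ↥(Sᶜ) → ℕ),
      IsRecolSeq (G.induce Sᶜ) (fun u => L u.1) φ (fun u => α u.1) (fun u => β u.1) ∧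
      ∀ u : ↥(Sᶜ), recolorCount φ u ≤ k) :
    ∃ (M : ℕ) (ψ : Fin (M + 1) → V → ℕ),
      IsRecolSeq G L ψ α β ∧ ∀ u : V, recolorCount ψ u ≤ k := by
  have hinjective : Function.Injective ![f, e, d, b, c, a] := by
    suffices [f, e, d, b, c, a].Nodup from List.nodup_ofFn.1 this
    grind
  have hrange : S = Set.range ![f, e, d, b, c, a] := by
    rw [hS]
    simp only [Matrix.range_cons, Matrix.range_empty, Set.union_empty]
    grind
  have hdeg : ∀ i, G.degree (![f, e, d, b, c, a] i) ≤ ![5, 6, 6, 6, 6, 5] i := by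
    intro i
    fin_cases i
    exacts [hdegf, hdege, hdegd, hdegb, hdegc, hdega]
  subst hrange
  obtain ⟨m, θ, hθ, hcount⟩ := hrec
  refine HelpPlan.exists_isRecolSeq (sixVertexPlan hL hbc hcd hef hce hdeg) hinjective
    (inner := ![{1}, {0, 2, 4}, {1, 3, 4}, {2, 4, 5}, {1, 2, 3, 5}, {3, 4}])
    (o := ![4, 3, 3, 3, 2, 3]) ?_ (fun i => (hdeg i).trans (le_of_eq ?_))
    (fun n q => moves_le_of_isFeasible_sixVertexPlan hk) hα hβ hθ hcount
  · simp [Fin.forall_fin_succ, hab, hab.symm, hbc, hbc.symm, hcd, hcd.symm, hde, hde.symm, hef,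
      hef.symm, hac, hac.symm, hbd, hbd.symm, hce, hce.symm]
  · revert i
    decide

/-- configuration RC(d): if `G` contains this configuration and `G − S` has a
`k`-good recoloring sequence between the restrictions of `α` and `β` (`k ≥ 416`),
then `G` has a `k`-good recoloring sequence from `α` to `β`. -/
theorem stmt_10 {V : Type} [Fintype V] [DecidableEq V]
    (G : SimpleGraph V) [DecidableRel G.Adj]
    (k : ℕ) (hk : 416 ≤ k)
    (L : V → Finset ℕ) (hL : ∀ u, (L u).card = 10)
    (α β : V → ℕ) (hα : IsLColoring G L α) (hβ : IsLColoring G L β)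
    (a b c d e f : V) (hnodup : ([a, b, c, d, e, f] : List V).Nodup)
    (he1: G.Adj a b)
    (he2: G.Adj b c)
    (he3: G.Adj c d)
    (he4: G.Adj d e)
    (he5: G.Adj e f)
    (he6: G.Adj a c)
    (he7: G.Adj b d)
    (he8: G.Adj c e)
    (hda : G.degree a = 5)
    (hdb : G.degree b = 6)
    (hdc : G.degree c = 6)
    (hdd : G.degree d = 6)
    (hde : G.degree e = 6)
    (hdf : G.degree f = 5)
    (S : Set V) (hS : S = {a, b, c, d, e, f})
    (hrec : ∃ (m : ℕ) (φ : Fin (m + 1) → ↥(Sᶜ) → ℕ),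
      IsRecolSeq (G.induce Sᶜ) (fun u => L u.1) φ (fun u => α u.1) (fun u => β u.1) ∧
      ∀ u : ↥(Sᶜ), recolorCount φ u ≤ k) :
    ∃ (M : ℕ) (ψ : Fin (M + 1) → V → ℕ),
      IsRecolSeq G L ψ α β ∧ ∀ u : V, recolorCount ψ u ≤ k := by
  exact stmt_10_general G k (by omega) L (fun u => (hL u).ge) α β hα hβ a b c d e f hnodup he1 he2
    he3 he4 he5 he6 he7 he8 hda.le hdb.le hdc.le hdd.le hde.le hdf.le S hS hrec
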